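/- Suppose Q : ℝ → S → A → ℝ and V : ℝ → S → ℝ are differentiable in the parameter t and satisfy, for all t, s, a, the policy-evaluation Bellman equations Q t s a = R t s a + γ · Σ_{s'} f t s a s' · V t s' and V t s = Σ_a π t s a · Q t s a. Then for all t, s, a: (d/dt) Q t s a = (d/dt) R t s a + γ · Σ_{s'} f t s a s' · ( (d/dt) V t s' + V t s' · (d/dt) log(f t s a s') ), and (d/dt) V t s = Σ_a π t s a · ( (d/dt) Q t s a + Q t s a · (d/dt) log(π t s a) ). (Lemma 2: sensitivities of Q^π and V^π.) -/

import Mathlib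

/-!
By the log-derivative identity `p • D(log p) = D p`, the product rule takes the form
`D(p • v) = p • (D v + v ⊗ D(log p))` wherever `p` does not vanish. Summing this over
successor states differentiates the Bellman equation for `Q`, and summing it over actions the one
for `V`.
-/

open scoped Topology

section LogDerivative

variable {E F : Type*} [NormedAddCommGroup E] [NormedSpace ℝ E]
  [NormedAddCommGroup F] [NormedSpace ℝ F] {x : E}

theorem smul_fderiv_log {p : E → ℝ} (hp : DifferentiableAt ℝ p x) (hpx : p x ≠ 0) :
    p x • fderiv ℝ (fun y => Real.log (p y)) x = fderiv ℝ p x := by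
  rw [fderiv.log hp hpx, smul_inv_smul₀ hpx]

theorem hasFDerivAt_smul_fderiv_log {p : E → ℝ} {v : E → F}
    (hp : DifferentiableAt ℝ p x) (hpx : p x ≠ 0) (hv : DifferentiableAt ℝ v x) :
    HasFDerivAt (fun y => p y • v y)
      (p x • (fderiv ℝ v x + (fderiv ℝ (fun y => Real.log (p y)) x).smulRight (v x))) x := by
  refine (hp.hasFDerivAt.fun_smul hv.hasFDerivAt).congr_fderiv ?_
  rw [← smul_fderiv_log hp hpx]
  ext w
  simp [smul_smul]

theorem hasFDerivAt_sum_smul_fderiv_log {ι : Type*} {u : Finset ι} {p : E → ι → ℝ} {v : E → ι → F}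
    (hp : ∀ i ∈ u, DifferentiableAt ℝ (fun y => p y i) x) (hpx : ∀ i ∈ u, p x i ≠ 0)
    (hv : ∀ i ∈ u, DifferentiableAt ℝ (fun y => v y i) x) :
    HasFDerivAt (fun y => ∑ i ∈ u, p y i • v y i)
      (∑ i ∈ u, p x i • (fderiv ℝ (fun y => v y i) x +
        (fderiv ℝ (fun y => Real.log (p y i)) x).smulRight (v x i))) x :=
  .fun_sum fun i hi => hasFDerivAt_smul_fderiv_log (hp i hi) (hpx i hi) (hv i hi)

end LogDerivative

theorem policy_evaluation_sensitivity_general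
    {E F S A : Type*} [NormedAddCommGroup E] [NormedSpace ℝ E]
    [NormedAddCommGroup F] [NormedSpace ℝ F] [Fintype S] [Fintype A]
    {γ : ℝ} {R : E → S → A → F} {f : E → S → A → S → ℝ} {π : E → S → A → ℝ}
    {Q : E → S → A → F} {V : E → S → F} {θ : E}
    (hR : ∀ s a, DifferentiableAt ℝ (fun t => R t s a) θ)
    (hf_pos : ∀ s a s', 0 < f θ s a s')
    (hf : ∀ s a s', DifferentiableAt ℝ (fun t => f t s a s') θ)
    (hπ_pos : ∀ s a, 0 < π θ s a)
    (hπ : ∀ s a, DifferentiableAt ℝ (fun t => π t s a) θ)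
    (hV : ∀ s, DifferentiableAt ℝ (fun t => V t s) θ)
    (hBellQ : ∀ s a, ∀ᶠ t in 𝓝 θ, Q t s a = R t s a + γ • ∑ s', f t s a s' • V t s')
    (hBellV : ∀ s, ∀ᶠ t in 𝓝 θ, V t s = ∑ a, π t s a • Q t s a) :
    (∀ s a, HasFDerivAt (fun t => Q t s a)
      (fderiv ℝ (fun t => R t s a) θ +
        γ • ∑ s', f θ s a s' • (fderiv ℝ (fun t => V t s') θ +
          (fderiv ℝ (fun t => Real.log (f t s a s')) θ).smulRight (V θ s'))) θ) ∧
    (∀ s, HasFDerivAt (fun t => V t s)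
      (∑ a, π θ s a • (fderiv ℝ (fun t => Q t s a) θ +
        (fderiv ℝ (fun t => Real.log (π t s a)) θ).smulRight (Q θ s a))) θ) := by
  have hQ (s : S) (a : A) :=
    have h_next := hasFDerivAt_sum_smul_fderiv_log (u := .univ)
      (fun s' _ => hf s a s') (fun s' _ => (hf_pos s a s').ne') (fun s' _ => hV s')
    ((hR s a).hasFDerivAt.fun_add (h_next.fun_const_smul γ)).congr_of_eventuallyEq (hBellQ s a)
  refine ⟨hQ, fun s => ?_⟩
  have h_policy := hasFDerivAt_sum_smul_fderiv_log (u := .univ)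
    (fun a _ => hπ s a) (fun a _ => (hπ_pos s a).ne') (fun a _ => (hQ s a).differentiableAt)
  exact h_policy.congr_of_eventuallyEq (hBellV s)

/-- Lemma 2 (sensitivities of `Q^π` and `V^π`): if `Q` and `V` satisfy the
policy-evaluation Bellman equations for a parameterized reward `R`, kernel `f`
and policy `π`, then their derivatives in the parameter satisfy the stated recursions. -/
theorem policy_evaluation_sensitivity
    {S A : Type*} [Fintype S] [Fintype A] [Nonempty S] [Nonempty A]
    (γ : ℝ)
    (R : ℝ → S → A → ℝ) (f : ℝ → S → A → S → ℝ) (π : ℝ → S → A → ℝ)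
    (Q : ℝ → S → A → ℝ) (V : ℝ → S → ℝ)
    (hRdiff : ∀ s a, Differentiable ℝ (fun t => R t s a))
    (hfpos : ∀ t s a s', 0 < f t s a s')
    (hfdiff : ∀ s a s', Differentiable ℝ (fun t => f t s a s'))
    (hπpos : ∀ t s a, 0 < π t s a)
    (hπdiff : ∀ s a, Differentiable ℝ (fun t => π t s a))
    (hQdiff : ∀ s a, Differentiable ℝ (fun t => Q t s a))
    (hVdiff : ∀ s, Differentiable ℝ (fun t => V t s))
    (hBellQ : ∀ t (s : S) (a : A), Q t s a = R t s a + γ * ∑ s', f t s a s' * V t s')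
    (hBellV : ∀ t (s : S), V t s = ∑ a, π t s a * Q t s a) :
    (∀ t (s : S) (a : A),
      deriv (fun t => Q t s a) t =
        deriv (fun t => R t s a) t +
          γ * ∑ s', f t s a s' *
            (deriv (fun t => V t s') t +
              V t s' * deriv (fun t => Real.log (f t s a s')) t)) ∧
    (∀ t (s : S),
      deriv (fun t => V t s) t =
        ∑ a, π t s a *
          (deriv (fun t => Q t s a) t +
            Q t s a * deriv (fun t => Real.log (π t s a)) t)) := by
  have h (t : ℝ) := policy_evaluation_sensitivity_general (hRdiff · · t) (hfpos t) (hfdiff · · · t)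
    (hπpos t) (hπdiff · · t) (hVdiff · t) (fun s a => .of_forall (hBellQ · s a))
    (fun s => .of_forall (hBellV · s))
  exact ⟨fun t s a => by simpa [mul_add, mul_comm] using ((h t).1 s a).hasDerivAt.deriv,
    fun t s => by simpa [mul_add, mul_comm] using ((h t).2 s).hasDerivAt.deriv⟩
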